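/- arXiv:1005.0521 — 3 statements merged into one kernel-verified Lean document; each statement's English description precedes it below -/
import Mathlib

section
/- Let α be a type and let R, Ro be binary relations on α (R is 'generic rewriting', Ro is 'outermost rewriting') such that Ro is contained in R and the following local commutation property holds: whenever Ro G H and R G J with H ≠ J, either Ro J H, or there exists K with R H K and Ro J K. Then for all n, m and all G, H, J, if G Ro^n H and G R^m J, there exist K and natural numbers k, l such that H R^k K, J Ro^l K, and n + k ≤ m + l. -/
/-- `NSteps R n x y` : there is a chain `x = f 0, f 1, …, f n = y` with
`R (f i) (f (i+1))` for each `i < n`, i.e. an `n`-step `R`-reduction sequence. -/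
def NSteps {α : Type*} (R : α → α → Prop) (n : ℕ) (x y : α) : Prop :=
  ∃ f : ℕ → α, f 0 = x ∧ f n = y ∧ ∀ i < n, R (f i) (f (i + 1))

namespace NSteps

variable {α : Type*} {R : α → α → Prop} {m n : ℕ} {x y z : α}

theorem refl (R : α → α → Prop) (x : α) : NSteps R 0 x x :=
  ⟨fun _ => x, rfl, rfl, fun _ hi => absurd hi (Nat.not_lt_zero _)⟩

theorem eq_of_zero (h : NSteps R 0 x y) : x = y := by
  obtain ⟨f, rfl, rfl, -⟩ := h
  rfl

theorem succ_head (h : NSteps R (n + 1) x y) : ∃ z, R x z ∧ NSteps R n z y := by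
  obtain ⟨f, rfl, rfl, hf⟩ := h
  exact ⟨f 1, hf 0 n.succ_pos, fun i => f (i + 1), rfl, rfl, fun i hi => hf (i + 1) (by omega)⟩

theorem succ_tail (h : NSteps R (n + 1) x y) : ∃ z, NSteps R n x z ∧ R z y := by
  obtain ⟨f, rfl, rfl, hf⟩ := h
  exact ⟨f n, ⟨f, rfl, rfl, fun i hi => hf i (by omega)⟩, hf n n.lt_succ_self⟩

theorem tail (h : NSteps R n x y) (hyz : R y z) : NSteps R (n + 1) x z := by
  obtain ⟨f, rfl, rfl, hf⟩ := h
  refine ⟨fun i => if i ≤ n then f i else z, by simp, by simp, fun i hi => ?_⟩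
  obtain hi | rfl := Nat.lt_succ_iff_lt_or_eq.mp hi
  · simpa [hi.le, Nat.succ_le_of_lt hi] using hf i hi
  · simpa using hyz

theorem trans (hxy : NSteps R m x y) (hyz : NSteps R n y z) : NSteps R (m + n) x z := by
  induction n generalizing z with
  | zero => exact hyz.eq_of_zero ▸ hxy
  | succ n ih =>
    obtain ⟨w, hyw, hwz⟩ := hyz.succ_tail
    exact (ih hyw).tail hwz

/-- A single outermost step against `m` generic steps: either the outermost step is absorbed, and
the completion on its side is strictly shorter than `m`, or one outermost step remains. -/
theorem strip {Ro : α → α → Prop}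
    (hcomm : ∀ G H J, Ro G H → R G J → H ≠ J → Ro J H ∨ ∃ K, R H K ∧ Ro J K)
    {G H J : α} (hGH : Ro G H) (hGJ : NSteps R m G J) :
    (∃ k < m, NSteps R k H J) ∨ ∃ K, ∃ k ≤ m, NSteps R k H K ∧ Ro J K := by
  induction m generalizing J with
  | zero => exact .inr ⟨H, 0, le_rfl, refl R H, hGJ.eq_of_zero ▸ hGH⟩
  | succ m ih =>
    obtain ⟨I, hGI, hIJ⟩ := hGJ.succ_tail
    obtain ⟨k, hk, hHI⟩ | ⟨K, k, hk, hHK, hIK⟩ := ih hGI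
    · exact .inl ⟨k + 1, by omega, hHI.tail hIJ⟩
    · by_cases hKJ : K = J
      · exact .inl ⟨k, by omega, hKJ ▸ hHK⟩
      · obtain hJK | ⟨L, hKL, hJL⟩ := hcomm I K J hIK hIJ hKJ
        · exact .inr ⟨K, k, by omega, hHK, hJK⟩
        · exact .inr ⟨L, k + 1, by omega, hHK.tail hKL, hJL⟩

end NSteps

theorem outermost_commutation
    {α : Type*} (R Ro : α → α → Prop)
    (hsub : ∀ x y, Ro x y → R x y)
    (hcomm : ∀ G H J, Ro G H → R G J → H ≠ J →
      Ro J H ∨ ∃ K, R H K ∧ Ro J K) :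
    ∀ (n m : ℕ) (G H J : α), NSteps Ro n G H → NSteps R m G J →
      ∃ (K : α) (k l : ℕ), NSteps R k H K ∧ NSteps Ro l J K ∧ n + k ≤ m + l := by
  intro n
  induction n with
  | zero =>
    intro m G H J hGH hGJ
    exact ⟨J, m, 0, hGH.eq_of_zero ▸ hGJ, NSteps.refl Ro J, by omega⟩
  | succ n ih =>
    intro m G H J hGH hGJ
    obtain ⟨I, hGI, hIH⟩ := hGH.succ_head
    obtain ⟨k, hk, hIJ⟩ | ⟨K, k, hk, hIK, hJK⟩ := NSteps.strip hcomm hGI hGJ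
    · obtain ⟨L, p, q, hHL, hJL, hle⟩ := ih k I H J hIH hIJ
      exact ⟨L, p, q, hHL, hJL, by omega⟩
    · obtain ⟨L, p, q, hHL, hKL, hle⟩ := ih k I H K hIH hIK
      exact ⟨L, p, 0 + 1 + q, hHL, ((NSteps.refl Ro J).tail hJK).trans hKL, by omega⟩
end

section
/- Let α be a type and let R, Ro, Ri be binary relations on α with Ro ⊆ R and Ri ⊆ R. Assume the outermost local commutation property: whenever Ro G H and R G J with H ≠ J, either Ro J H, or there exists K with R H K and Ro J K; and assume the innermost local commutation property: whenever R G H and Ri G J with H ≠ J, either R J H, or there exists K with Ri H K and R J K. Suppose G Ro^n H, G R^m J, and G Ri^k K, where H, J, and K are all R-normal. Then H = J, J = K, n ≤ m, and m ≤ k. -/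
/-- `x` is `R`-normal: no `R`-step is possible from `x`. -/
def RNormal {α : Type*} (R : α → α → Prop) (x : α) : Prop :=
  ¬ ∃ y, R x y

theorem nSteps_zero {α : Type*} {R : α → α → Prop} {x y : α} :
    NSteps R 0 x y ↔ x = y := by
  constructor
  · rintro ⟨f, rfl, rfl, -⟩
    rfl
  · rintro rfl
    exact ⟨fun _ => x, rfl, rfl, by simp⟩

theorem nSteps_succ {α : Type*} {R : α → α → Prop} {n : ℕ} {x y : α} :
    NSteps R (n + 1) x y ↔ ∃ z, R x z ∧ NSteps R n z y := by
  constructor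
  · rintro ⟨f, rfl, rfl, hf⟩
    exact ⟨f 1, hf 0 n.succ_pos, fun i => f (i + 1), rfl, rfl,
      fun i hi => hf (i + 1) (Nat.succ_lt_succ hi)⟩
  · rintro ⟨z, hxz, f, rfl, rfl, hf⟩
    refine ⟨fun i => Nat.casesOn i x f, rfl, rfl, fun i hi => ?_⟩
    cases i with
    | zero => exact hxz
    | succ i => exact hf i (Nat.lt_of_succ_lt_succ hi)

theorem RNormal.mono {α : Type*} {R S : α → α → Prop} (hSR : ∀ x y, S x y → R x y)
    {x : α} (hx : RNormal R x) : RNormal S x :=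
  fun ⟨y, hy⟩ => hx ⟨y, hSR x y hy⟩

/-- `S` commutes locally with `T`, up to an `S`-step absorbing a diverging `T`-step. -/
def LocallyCommutes {α : Type*} (S T : α → α → Prop) : Prop :=
  ∀ x y z, S x y → T x z → y ≠ z → S z y ∨ ∃ w, T y w ∧ S z w

/-- An `S`-step strictly shortens every `T`-reduction to an `S`-normal element. -/
theorem LocallyCommutes.exists_lt_nSteps {α : Type*} {S T : α → α → Prop}
    (hST : LocallyCommutes S T) {m : ℕ} {x y z : α} (hxy : S x y) (hxz : NSteps T m x z)
    (hz : RNormal S z) : ∃ m' < m, NSteps T m' y z := by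
  induction m generalizing x y with
  | zero =>
    obtain rfl := nSteps_zero.1 hxz
    exact (hz ⟨y, hxy⟩).elim
  | succ m ih =>
    obtain ⟨u, hxu, huz⟩ := nSteps_succ.1 hxz
    by_cases hyu : y = u
    · exact ⟨m, m.lt_succ_self, hyu ▸ huz⟩
    · rcases hST x y u hxy hxu hyu with huy | ⟨w, hyw, huw⟩
      · obtain ⟨m', hm', h⟩ := ih huy huz
        exact ⟨m', hm'.trans m.lt_succ_self, h⟩
      · obtain ⟨m', hm', h⟩ := ih huw huz
        exact ⟨m' + 1, Nat.succ_lt_succ hm', nSteps_succ.2 ⟨w, hyw, h⟩⟩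

/-- An `S`-reduction to a `T`-normal element and a `T`-reduction to an `S`-normal element
end at the same point, and the `S`-reduction is no longer than the `T`-reduction. -/
theorem LocallyCommutes.eq_and_le {α : Type*} {S T : α → α → Prop}
    (hST : LocallyCommutes S T) {n m : ℕ} {x y z : α} (hxy : NSteps S n x y)
    (hxz : NSteps T m x z) (hy : RNormal T y) (hz : RNormal S z) : y = z ∧ n ≤ m := by
  induction n generalizing x m with
  | zero =>
    obtain rfl := nSteps_zero.1 hxy
    cases m with
    | zero => exact ⟨nSteps_zero.1 hxz, le_rfl⟩
    | succ m =>
      obtain ⟨u, hxu, -⟩ := nSteps_succ.1 hxz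
      exact (hy ⟨u, hxu⟩).elim
  | succ n ih =>
    obtain ⟨u, hxu, huy⟩ := nSteps_succ.1 hxy
    obtain ⟨m', hm', h⟩ := hST.exists_lt_nSteps hxu hxz hz
    obtain ⟨heq, hle⟩ := ih huy h
    exact ⟨heq, hle.trans_lt hm'⟩

theorem strategies_confluence
    {α : Type*} (R Ro Ri : α → α → Prop)
    (hsubo : ∀ x y, Ro x y → R x y)
    (hsubi : ∀ x y, Ri x y → R x y)
    (hcommo : ∀ G H J, Ro G H → R G J → H ≠ J →
      Ro J H ∨ ∃ K, R H K ∧ Ro J K)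
    (hcommi : ∀ G H J, R G H → Ri G J → H ≠ J →
      R J H ∨ ∃ K, Ri H K ∧ R J K)
    (n m k : ℕ) (G H J K : α)
    (hH : NSteps Ro n G H) (hJ : NSteps R m G J) (hK : NSteps Ri k G K)
    (hHnf : RNormal R H) (hJnf : RNormal R J) (hKnf : RNormal R K) :
    H = J ∧ J = K ∧ n ≤ m ∧ m ≤ k := by
  have hSo : LocallyCommutes Ro R := hcommo
  have hSi : LocallyCommutes R Ri := hcommi
  obtain ⟨hHJ, hnm⟩ := hSo.eq_and_le hH hJ hHnf (hJnf.mono hsubo)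
  obtain ⟨hJK, hmk⟩ := hSi.eq_and_le hJ hK (hJnf.mono hsubi) hKnf
  exact ⟨hHJ, hJK, hnm, hmk⟩
end

section
/- Let α be a type and let R, Ro be binary relations on α with Ro ⊆ R, satisfying the outermost local commutation property: whenever Ro G H and R G J with H ≠ J, either Ro J H, or there exists K with R H K and Ro J K. If G Ro^n H with H R-normal and G R^m J with J R-normal, then H = J and n ≤ m. -/
namespace NSteps

variable {α : Type*} {R : α → α → Prop} {n : ℕ} {x y z : α}

theorem zero_iff : NSteps R 0 x y ↔ x = y :=
  ⟨fun ⟨_, hx, hy, _⟩ => hx.symm.trans hy, fun h => ⟨fun _ => x, rfl, h, by simp⟩⟩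

theorem head (h : R x y) (hs : NSteps R n y z) : NSteps R (n + 1) x z := by
  obtain ⟨f, rfl, rfl, hf⟩ := hs
  refine ⟨fun i => Nat.casesOn i x f, rfl, rfl, fun i hi => ?_⟩
  cases i with
  | zero => exact h
  | succ i => exact hf i (Nat.lt_of_succ_lt_succ hi)

theorem exists_head (hs : NSteps R (n + 1) x z) : ∃ y, R x y ∧ NSteps R n y z := by
  obtain ⟨f, rfl, rfl, hf⟩ := hs
  exact ⟨f 1, hf 0 n.succ_pos, fun i => f (i + 1), rfl, rfl,
    fun i hi => hf (i + 1) (Nat.succ_lt_succ hi)⟩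

end NSteps

/-- An outermost step from `G` strictly shortens some reduction from `G` to normal form. -/
theorem exists_shorter_of_outermost_step {α : Type*} {R Ro : α → α → Prop}
    (hsub : ∀ x y, Ro x y → R x y)
    (hcomm : ∀ G H J, Ro G H → R G J → H ≠ J →
      Ro J H ∨ ∃ K, R H K ∧ Ro J K)
    {m : ℕ} {G H J : α} (hGH : Ro G H) (hJ : NSteps R m G J) (hJnf : RNormal R J) :
    ∃ k < m, NSteps R k H J := by
  induction m generalizing G H with
  | zero =>
    obtain rfl := NSteps.zero_iff.1 hJ
    exact absurd ⟨H, hsub _ _ hGH⟩ hJnf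
  | succ m ih =>
    obtain ⟨L, hGL, hLJ⟩ := hJ.exists_head
    by_cases hHL : H = L
    · subst hHL
      exact ⟨m, m.lt_succ_self, hLJ⟩
    · obtain hLH | ⟨K, hHK, hLK⟩ := hcomm G H L hGH hGL hHL
      · obtain ⟨k, hk, hs⟩ := ih hLH hLJ
        exact ⟨k, hk.trans m.lt_succ_self, hs⟩
      · obtain ⟨k, hk, hs⟩ := ih hLK hLJ
        exact ⟨k + 1, Nat.succ_lt_succ hk, hs.head hHK⟩

theorem outermost_fastest
    {α : Type*} (R Ro : α → α → Prop)
    (hsub : ∀ x y, Ro x y → R x y)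
    (hcomm : ∀ G H J, Ro G H → R G J → H ≠ J →
      Ro J H ∨ ∃ K, R H K ∧ Ro J K)
    (n m : ℕ) (G H J : α)
    (hH : NSteps Ro n G H) (hHnf : RNormal R H)
    (hJ : NSteps R m G J) (hJnf : RNormal R J) :
    H = J ∧ n ≤ m := by
  induction n generalizing G m with
  | zero =>
    obtain rfl := NSteps.zero_iff.1 hH
    cases m with
    | zero => exact ⟨NSteps.zero_iff.1 hJ, le_rfl⟩
    | succ m =>
      obtain ⟨L, hGL, -⟩ := hJ.exists_head
      exact absurd ⟨L, hGL⟩ hHnf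
  | succ n ih =>
    obtain ⟨L, hGL, hLH⟩ := hH.exists_head
    obtain ⟨k, hk, hs⟩ := exists_shorter_of_outermost_step hsub hcomm hGL hJ hJnf
    obtain ⟨h, hnk⟩ := ih k L hLH hs
    exact ⟨h, hnk.trans_lt hk⟩
end
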